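/- Let a₀, …, a₇ be the vertices of the unit cube [0,1]³ ⊂ ℝ³ (a_k has coordinates the binary digits of k) and let b = (1/2, 1/2, 1/2) be the center of the cube. Then the ten tetrahedra conv{a₀,a₁,a₂,a₄}, conv{a₃,a₅,a₆,a₇}, conv{b,a₁,a₂,a₄}, conv{b,a₁,a₄,a₅}, conv{b,a₁,a₃,a₅}, conv{b,a₃,a₅,a₆}, conv{b,a₂,a₃,a₆}, conv{b,a₂,a₄,a₆}, conv{b,a₄,a₅,a₆}, conv{b,a₁,a₂,a₃} each have affinely independent vertex sets, their union is [0,1]³, and they have pairwise disjoint interiors. (This is the 'type B₀' triangulation of the cube: the two corner tetrahedra at a₀ and a₇ are removed and the remaining polytope, which has eight triangular boundary faces, is coned from the center b.) -/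

import Mathlib

noncomputable section

/-- The point `(a, b, c)` of Euclidean 3-space. -/
def pt3 (a b c : ℝ) : EuclideanSpace ℝ (Fin 3) :=
  (WithLp.equiv 2 (Fin 3 → ℝ)).symm ![a, b, c]

/-- The unit cube `[0,1]³` in Euclidean 3-space. -/
def unitCube : Set (EuclideanSpace ℝ (Fin 3)) :=
  {x | ∀ i : Fin 3, x i ∈ Set.Icc (0 : ℝ) 1}

/-- The vertices `a₀, …, a₇` of the unit cube (`a_k` has coordinates the binary digits
of `k`). -/
def a₀ : EuclideanSpace ℝ (Fin 3) := pt3 0 0 0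
def a₁ : EuclideanSpace ℝ (Fin 3) := pt3 1 0 0
def a₂ : EuclideanSpace ℝ (Fin 3) := pt3 0 1 0
def a₃ : EuclideanSpace ℝ (Fin 3) := pt3 1 1 0
def a₄ : EuclideanSpace ℝ (Fin 3) := pt3 0 0 1
def a₅ : EuclideanSpace ℝ (Fin 3) := pt3 1 0 1
def a₆ : EuclideanSpace ℝ (Fin 3) := pt3 0 1 1
def a₇ : EuclideanSpace ℝ (Fin 3) := pt3 1 1 1

/-- The center `b = (1/2, 1/2, 1/2)` of the unit cube. -/
def bCtr : EuclideanSpace ℝ (Fin 3) := pt3 (1/2) (1/2) (1/2)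

/-- The tetrahedron `conv{p, q, r, s}`. -/
def tet (p q r s : EuclideanSpace ℝ (Fin 3)) : Set (EuclideanSpace ℝ (Fin 3)) :=
  convexHull ℝ {p, q, r, s}

/-- The 'type B₀' family of ten tetrahedra: the two corner tetrahedra at `a₀` and `a₇`
together with the cone from the center `b` over the eight triangular boundary faces of the
remaining polytope. -/
def typeB₀ : Fin 10 → Set (EuclideanSpace ℝ (Fin 3)) :=
  ![tet a₀ a₁ a₂ a₄, tet a₃ a₅ a₆ a₇,
    tet bCtr a₁ a₂ a₄, tet bCtr a₁ a₄ a₅, tet bCtr a₁ a₃ a₅, tet bCtr a₃ a₅ a₆,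
    tet bCtr a₂ a₃ a₆, tet bCtr a₂ a₄ a₆, tet bCtr a₄ a₅ a₆, tet bCtr a₁ a₂ a₃]

end

/-!
Removing the corner tetrahedra at `a₀` and `a₇` leaves the slab `1 ≤ x₀ + x₁ + x₂ ≤ 2` of the cube,
an affine octahedron with centre `b` and antipodal vertex pairs `{a₁, a₆}`, `{a₂, a₅}`, `{a₃, a₄}`.
In the affine coordinates `uᵢ = 1 - ∑ xⱼ + xᵢ`, which vanish at `b` and are dual to `a₁, a₂, a₄`,
it is the unit ball `∑ |uᵢ| ≤ 1`, and the eight cones from `b` are its intersections with the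
closed orthants. So they cover it because every point lies in some orthant, and their interiors
are disjoint because `uᵢ` cannot have two strict signs.
-/

section BarycentricDual

variable {k V P ι : Type*} [Ring k] [AddCommGroup V] [Module k V] [AddTorsor V P] [DecidableEq ι]

/-- The affine functions `f i` are barycentric coordinates for the points `p j`: they restrict to
the Kronecker delta on them. The points are not required to span the space. -/
def IsBarycentricDual (f : ι → P →ᵃ[k] k) (p : ι → P) : Prop :=
  ∀ i j, f i (p j) = if i = j then 1 else 0

theorem affineMap_sum_apply {κ : Type*} (s : Finset κ) (g : κ → P →ᵃ[k] k) (x : P) :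
    (∑ j ∈ s, g j) x = ∑ j ∈ s, g j x := by
  classical
  induction s using Finset.induction_on with
  | empty => simp
  | insert j s hj ih => simp [Finset.sum_insert hj, ih]

namespace IsBarycentricDual

theorem affineIndependent {f : ι → P →ᵃ[k] k} {p : ι → P} (h : IsBarycentricDual f p) :
    AffineIndependent k p := by
  have pi_comp : AffineMap.pi f ∘ p = fun j ↦ Pi.single j 1 := by
    ext j i
    simp [h i j, Pi.single_apply]
  refine AffineIndependent.of_comp (AffineMap.pi f) ?_
  rw [pi_comp]
  exact (Pi.linearIndependent_single_one ι k).affineIndependent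

theorem cone {n : ℕ} {g : Fin n → P →ᵃ[k] k} {w : Fin n → P} {c : P}
    (h : IsBarycentricDual g w) (hc : ∀ j, g j c = 0) :
    IsBarycentricDual (Matrix.vecCons (AffineMap.const k P 1 - ∑ j, g j) g)
      (Matrix.vecCons c w) := by
  intro i j
  cases i using Fin.cases <;> cases j using Fin.cases <;>
    simp [affineMap_sum_apply, hc, h _ _, (Fin.succ_ne_zero _).symm]

end IsBarycentricDual

end BarycentricDual

namespace IsBarycentricDual

variable {ι E : Type*} [Fintype ι] [DecidableEq ι] [NormedAddCommGroup E] [NormedSpace ℝ E]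
  [FiniteDimensional ℝ E] {f : ι → E →ᵃ[ℝ] ℝ} {p : ι → E}

theorem exists_affineBasis (h : IsBarycentricDual f p)
    (hcard : Fintype.card ι = Module.finrank ℝ E + 1) :
    ∃ b : AffineBasis ι ℝ E, ⇑b = p ∧ ∀ i, b.coord i = f i := by
  have span_eq_top : affineSpan ℝ (Set.range p) = ⊤ :=
    h.affineIndependent.affineSpan_eq_top_iff_card_eq_finrank_add_one.2 hcard
  let b : AffineBasis ι ℝ E := ⟨p, h.affineIndependent, span_eq_top⟩
  refine ⟨b, rfl, fun i ↦ AffineMap.ext fun x ↦ ?_⟩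
  have apply_vertex : ∀ j, f i (b j) = if i = j then 1 else 0 := h i
  calc b.coord i x = ∑ j, b.coord j x • f i (b j) := by simp [apply_vertex]
    _ = Finset.univ.affineCombination ℝ (f i ∘ b) (fun j ↦ b.coord j x) :=
      (Finset.univ.affineCombination_eq_linear_combination _ _ (b.sum_coord_apply_eq_one x)).symm
    _ = f i (Finset.univ.affineCombination ℝ b fun j ↦ b.coord j x) :=
      (Finset.univ.map_affineCombination _ _ (b.sum_coord_apply_eq_one x) (f i)).symm
    _ = f i x := by rw [b.affineCombination_coord_eq_self]

theorem mem_convexHull_iff (h : IsBarycentricDual f p)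
    (hcard : Fintype.card ι = Module.finrank ℝ E + 1) {x : E} :
    x ∈ convexHull ℝ (Set.range p) ↔ ∀ i, 0 ≤ f i x := by
  obtain ⟨b, rfl, hb⟩ := h.exists_affineBasis hcard
  simp [b.convexHull_eq_nonneg_coord, hb]

theorem mem_interior_convexHull_iff (h : IsBarycentricDual f p)
    (hcard : Fintype.card ι = Module.finrank ℝ E + 1) {x : E} :
    x ∈ interior (convexHull ℝ (Set.range p)) ↔ ∀ i, 0 < f i x := by
  obtain ⟨b, rfl, hb⟩ := h.exists_affineBasis hcard
  simp [b.interior_convexHull, hb]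

theorem mem_convexHull_cone_iff {n : ℕ} {g : Fin n → E →ᵃ[ℝ] ℝ} {w : Fin n → E} {c x : E}
    (h : IsBarycentricDual g w) (hc : ∀ j, g j c = 0) (hn : n = Module.finrank ℝ E) :
    x ∈ convexHull ℝ (Set.range (Matrix.vecCons c w)) ↔ ∑ j, g j x ≤ 1 ∧ ∀ j, 0 ≤ g j x := by
  rw [(h.cone hc).mem_convexHull_iff (by simp [hn])]
  simp [Fin.forall_fin_succ (n := n), affineMap_sum_apply]

theorem mem_interior_convexHull_cone_iff {n : ℕ} {g : Fin n → E →ᵃ[ℝ] ℝ} {w : Fin n → E}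
    {c x : E} (h : IsBarycentricDual g w) (hc : ∀ j, g j c = 0) (hn : n = Module.finrank ℝ E) :
    x ∈ interior (convexHull ℝ (Set.range (Matrix.vecCons c w))) ↔
      ∑ j, g j x < 1 ∧ ∀ j, 0 < g j x := by
  rw [(h.cone hc).mem_interior_convexHull_iff (by simp [hn])]
  simp [Fin.forall_fin_succ (n := n), affineMap_sum_apply]

end IsBarycentricDual

section SignVector

variable {α ι : Type*} [AddCommGroup α] [LinearOrder α]

theorem abs_int_units_smul (ε : ℤˣ) (y : α) : |ε • y| = |y| := by
  rcases Int.units_eq_one_or ε with rfl | rfl <;> simp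

variable [IsOrderedAddMonoid α]

theorem exists_int_units_smul_nonneg (y : α) : ∃ ε : ℤˣ, 0 ≤ ε • y := by
  rcases le_total 0 y with hy | hy
  · exact ⟨1, by simpa⟩
  · exact ⟨-1, by simpa⟩

theorem int_units_eq_of_smul_pos {ε δ : ℤˣ} {y : α} (hε : 0 < ε • y) (hδ : 0 < δ • y) :
    ε = δ := by
  rcases Int.units_eq_one_or ε with rfl | rfl <;> rcases Int.units_eq_one_or δ with rfl | rfl
  · rfl
  · simp only [one_smul, Units.neg_smul, Left.neg_pos_iff] at hε hδ
    exact absurd hε hδ.not_gt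
  · simp only [one_smul, Units.neg_smul, Left.neg_pos_iff] at hε hδ
    exact absurd hε hδ.not_gt
  · rfl

theorem sum_int_units_smul_eq_sum_abs [Fintype ι] {ε : ι → ℤˣ} {y : ι → α}
    (h : ∀ i, 0 ≤ ε i • y i) : ∑ i, ε i • y i = ∑ i, |y i| :=
  Finset.sum_congr rfl fun i _ ↦ by rw [← abs_of_nonneg (h i), abs_int_units_smul]

theorem sum_abs_le_iff_forall_int_units [Fintype ι] {y : ι → α} {c : α} :
    ∑ i, |y i| ≤ c ↔ ∀ ε : ι → ℤˣ, ∑ i, ε i • y i ≤ c := by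
  refine ⟨fun h ε ↦ le_trans (Finset.sum_le_sum fun i _ ↦ ?_) h, fun h ↦ ?_⟩
  · exact (le_abs_self _).trans_eq (abs_int_units_smul _ _)
  · choose ε nonneg using fun i ↦ exists_int_units_smul_nonneg (y i)
    exact (sum_int_units_smul_eq_sum_abs nonneg).symm.trans_le (h ε)

end SignVector

theorem pairwise_disjoint_fin_succ {α : Type*} [PartialOrder α] [OrderBot α] {n : ℕ}
    {s : Fin (n + 1) → α} (h₀ : ∀ j, Disjoint (s 0) (s (Fin.succ j)))
    (h : Pairwise fun i j ↦ Disjoint (s (Fin.succ i)) (s (Fin.succ j))) :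
    Pairwise fun i j ↦ Disjoint (s i) (s j) :=
  pairwise_fin_succ_iff.2 ⟨fun i ↦ (h₀ i).symm, h₀, h⟩

section Coordinates

noncomputable section

/-- The Cartesian coordinate function `xᵢ` as an affine function. -/
def cartesianCoord (i : Fin 3) : EuclideanSpace ℝ (Fin 3) →ᵃ[ℝ] ℝ :=
  (EuclideanSpace.proj i : EuclideanSpace ℝ (Fin 3) →L[ℝ] ℝ).toLinearMap.toAffineMap

/-- The affine coordinate `uᵢ` along the `i`-th diagonal of the octahedron `a₁a₂a₃a₄a₅a₆`; for
`{i, j, k} = {0, 1, 2}` it is `1 - xⱼ - xₖ`. -/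
def octahedralCoord (i : Fin 3) : EuclideanSpace ℝ (Fin 3) →ᵃ[ℝ] ℝ :=
  AffineMap.const ℝ _ 1 - ∑ j, cartesianCoord j + cartesianCoord i

/-- The endpoint of the `i`-th diagonal of the octahedron `a₁a₂a₃a₄a₅a₆` at which `uᵢ = ε`. -/
def octahedronVertex (i : Fin 3) (ε : ℤˣ) : EuclideanSpace ℝ (Fin 3) :=
  if ε = 1 then ![a₁, a₂, a₄] i else ![a₆, a₅, a₃] i

end

variable (i j : Fin 3) (x : EuclideanSpace ℝ (Fin 3))

theorem cartesianCoord_apply : cartesianCoord i x = x i := rfl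

theorem octahedralCoord_apply : octahedralCoord i x = 1 - ∑ j, x j + x i := by
  simp [octahedralCoord, affineMap_sum_apply, cartesianCoord_apply]

theorem octahedralCoord_pt3 (a b c : ℝ) :
    octahedralCoord i (pt3 a b c) = ![1 - b - c, 1 - a - c, 1 - a - b] i := by
  rw [octahedralCoord_apply]
  fin_cases i <;> simp [Fin.sum_univ_three, pt3] <;> ring

theorem octahedralCoord_bCtr : octahedralCoord i bCtr = 0 := by
  rw [bCtr, octahedralCoord_pt3]
  fin_cases i <;> norm_num

theorem octahedralCoord_octahedronVertex (ε : ℤˣ) :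
    octahedralCoord i (octahedronVertex j ε) = if i = j then (ε : ℝ) else 0 := by
  rcases Int.units_eq_one_or ε with rfl | rfl <;> fin_cases i <;> fin_cases j <;>
    simp [octahedronVertex, octahedralCoord_pt3, a₁, a₂, a₃, a₄, a₅, a₆]

theorem three_sub_two_mul_sum_eq_sum_octahedralCoord :
    3 - 2 * ∑ i, x i = ∑ i, octahedralCoord i x := by
  simp only [octahedralCoord_apply, Fin.sum_univ_three]
  ring

theorem abs_three_sub_two_mul_sum_le :
    |3 - 2 * ∑ i, x i| ≤ ∑ i, |octahedralCoord i x| := by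
  rw [three_sub_two_mul_sum_eq_sum_octahedralCoord]
  exact Finset.abs_sum_le_sum_abs _ _

end Coordinates

section Tetrahedra

/-- The signs of `u₀, u₁, u₂` on the tetrahedron `typeB₀ (n + 2)`. -/
def octantSign : Fin 8 → Fin 3 → ℤˣ :=
  ![![1, 1, 1], ![1, -1, 1], ![1, -1, -1], ![-1, -1, -1],
    ![-1, 1, -1], ![-1, 1, 1], ![-1, -1, 1], ![1, 1, -1]]

theorem octantSign_bijective : Function.Bijective octantSign := by decide

-- The eight functions `1 - ∑ εᵢ uᵢ` are `2xᵢ`, `2(1 - xᵢ)`, `2(∑ xᵢ - 1)` and `2(2 - ∑ xᵢ)`.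
theorem sum_abs_octahedralCoord_le_one_iff (x : EuclideanSpace ℝ (Fin 3)) :
    ∑ i, |octahedralCoord i x| ≤ 1 ↔ x ∈ unitCube ∧ 1 ≤ ∑ i, x i ∧ ∑ i, x i ≤ 2 := by
  rw [sum_abs_le_iff_forall_int_units, octantSign_bijective.surjective.forall]
  simp only [octantSign, Matrix.cons_val', Matrix.cons_val_fin_one, octahedralCoord_apply,
    Fin.sum_univ_three, Matrix.cons_val_zero, Matrix.cons_val_one, Matrix.cons_val,
    Fin.forall_fin_succ, one_smul, Matrix.cons_val_succ, Units.neg_smul, forall_const, unitCube,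
    Set.mem_Icc, Fin.succ_zero_eq_one, Fin.succ_one_eq_two, IsEmpty.forall_iff, and_true,
    Set.mem_ofPred_eq]
  constructor
  · rintro ⟨_, _, _, _, _, _, _, _⟩
    refine ⟨⟨⟨?_, ?_⟩, ⟨?_, ?_⟩, ?_, ?_⟩, ?_, ?_⟩ <;> linarith
  · rintro ⟨⟨⟨_, _⟩, ⟨_, _⟩, _, _⟩, _, _⟩
    refine ⟨?_, ?_, ?_, ?_, ?_, ?_, ?_, ?_⟩ <;> linarith

open Equiv in
/-- The order in which the vertices of `typeB₀ (n + 2)` other than `b` are listed: the `j`-th of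
them lies on the diagonal `octantAxis n j` of the octahedron. -/
def octantAxis : Fin 8 → Perm (Fin 3) :=
  ![1, swap 1 2, swap 1 2, swap 0 2, finRotate 3, finRotate 3, swap 0 2, 1]

/-- The vertices of `typeB₀ (n + 2)` other than `b`. -/
noncomputable def octantVertex : Fin 8 → Fin 3 → EuclideanSpace ℝ (Fin 3) :=
  ![![a₁, a₂, a₄], ![a₁, a₄, a₅], ![a₁, a₃, a₅], ![a₃, a₅, a₆],
    ![a₂, a₃, a₆], ![a₂, a₄, a₆], ![a₄, a₅, a₆], ![a₁, a₂, a₃]]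

theorem octantVertex_eq_octahedronVertex (n : Fin 8) (j : Fin 3) :
    octantVertex n j = octahedronVertex (octantAxis n j) (octantSign n (octantAxis n j)) := by
  fin_cases n <;> fin_cases j <;> rfl

theorem tet_eq_convexHull_range (p q r s : EuclideanSpace ℝ (Fin 3)) :
    tet p q r s = convexHull ℝ (Set.range ![p, q, r, s]) := by
  simp only [tet, Matrix.range_cons, Matrix.range_empty, Set.union_empty, Set.singleton_union]

theorem typeB₀_zero_eq_convexHull : typeB₀ 0 = convexHull ℝ (Set.range ![a₀, a₁, a₂, a₄]) :=
  tet_eq_convexHull_range _ _ _ _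

theorem typeB₀_one_eq_convexHull : typeB₀ 1 = convexHull ℝ (Set.range ![a₃, a₅, a₆, a₇]) :=
  tet_eq_convexHull_range _ _ _ _

theorem typeB₀_octant_eq_convexHull (n : Fin 8) :
    typeB₀ n.succ.succ = convexHull ℝ (Set.range (Matrix.vecCons bCtr (octantVertex n))) := by
  fin_cases n <;> exact tet_eq_convexHull_range _ _ _ _

theorem isBarycentricDual_lowFace : IsBarycentricDual cartesianCoord ![a₁, a₂, a₄] := by
  intro i j
  fin_cases i <;> fin_cases j <;> simp [cartesianCoord_apply, a₁, a₂, a₄, pt3]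

theorem cartesianCoord_a₀ (i : Fin 3) : cartesianCoord i a₀ = 0 := by
  fin_cases i <;> simp [cartesianCoord_apply, a₀, pt3]

theorem isBarycentricDual_highCorner :
    IsBarycentricDual
      ![.const ℝ _ 1 - cartesianCoord 2, .const ℝ _ 1 - cartesianCoord 1,
        .const ℝ _ 1 - cartesianCoord 0, ∑ i, cartesianCoord i - .const ℝ _ 2]
      ![a₃, a₅, a₆, a₇] := by
  intro i j
  fin_cases i <;> fin_cases j <;>
    simp [cartesianCoord_apply, Fin.sum_univ_three, a₃, a₅, a₆, a₇, pt3] <;>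
    norm_num

theorem isBarycentricDual_octantFace (n : Fin 8) :
    IsBarycentricDual (fun j ↦ octantSign n (octantAxis n j) • octahedralCoord (octantAxis n j))
      (octantVertex n) := by
  intro i j
  by_cases hij : i = j
  · simp [hij, octantVertex_eq_octahedronVertex, octahedralCoord_octahedronVertex,
      Units.smul_def, ← Int.cast_mul, ← Units.val_mul]
  · simp [hij, octantVertex_eq_octahedronVertex, octahedralCoord_octahedronVertex]

theorem octantSign_smul_octahedralCoord_bCtr (n : Fin 8) (j : Fin 3) :
    (octantSign n (octantAxis n j) • octahedralCoord (octantAxis n j)) bCtr = 0 := by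
  simp [octahedralCoord_bCtr]

variable {n : Fin 8} {x : EuclideanSpace ℝ (Fin 3)}

theorem mem_typeB₀_octant_iff :
    x ∈ typeB₀ n.succ.succ ↔
      ∑ i, |octahedralCoord i x| ≤ 1 ∧ ∀ i, 0 ≤ octantSign n i • octahedralCoord i x := by
  calc x ∈ typeB₀ n.succ.succ
    _ ↔ ∑ i, octantSign n i • octahedralCoord i x ≤ 1 ∧
        ∀ i, 0 ≤ octantSign n i • octahedralCoord i x := by
      rw [typeB₀_octant_eq_convexHull,
        (isBarycentricDual_octantFace n).mem_convexHull_cone_iff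
          (octantSign_smul_octahedralCoord_bCtr n) (by simp),
        ← Equiv.sum_comp (octantAxis n) fun i ↦ octantSign n i • octahedralCoord i x,
        ← (octantAxis n).forall_congr_right (q := fun i ↦ 0 ≤ octantSign n i • octahedralCoord i x)]
      rfl
    _ ↔ _ := and_congr_left fun nonneg ↦ by rw [sum_int_units_smul_eq_sum_abs nonneg]

theorem mem_interior_typeB₀_octant_iff :
    x ∈ interior (typeB₀ n.succ.succ) ↔
      ∑ i, |octahedralCoord i x| < 1 ∧ ∀ i, 0 < octantSign n i • octahedralCoord i x := by
  calc x ∈ interior (typeB₀ n.succ.succ)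
    _ ↔ ∑ i, octantSign n i • octahedralCoord i x < 1 ∧
        ∀ i, 0 < octantSign n i • octahedralCoord i x := by
      rw [typeB₀_octant_eq_convexHull,
        (isBarycentricDual_octantFace n).mem_interior_convexHull_cone_iff
          (octantSign_smul_octahedralCoord_bCtr n) (by simp),
        ← Equiv.sum_comp (octantAxis n) fun i ↦ octantSign n i • octahedralCoord i x,
        ← (octantAxis n).forall_congr_right (q := fun i ↦ 0 < octantSign n i • octahedralCoord i x)]
      rfl
    _ ↔ _ := and_congr_left fun pos ↦ by
      rw [sum_int_units_smul_eq_sum_abs fun i ↦ (pos i).le]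

theorem mem_typeB₀_zero_iff : x ∈ typeB₀ 0 ↔ ∑ i, x i ≤ 1 ∧ ∀ i, 0 ≤ x i := by
  rw [typeB₀_zero_eq_convexHull]
  exact isBarycentricDual_lowFace.mem_convexHull_cone_iff cartesianCoord_a₀ (by simp)

theorem mem_typeB₀_one_iff : x ∈ typeB₀ 1 ↔ 2 ≤ ∑ i, x i ∧ ∀ i, x i ≤ 1 := by
  rw [typeB₀_one_eq_convexHull, isBarycentricDual_highCorner.mem_convexHull_iff (by simp)]
  simp only [Fin.forall_fin_succ, Matrix.cons_val_zero, Matrix.cons_val_succ,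
    Matrix.cons_val_fin_one, AffineMap.coe_sub, AffineMap.coe_const, Pi.sub_apply,
    Function.const_apply, affineMap_sum_apply, cartesianCoord_apply, sub_nonneg, forall_const,
    Fin.succ_zero_eq_one, Fin.succ_one_eq_two, IsEmpty.forall_iff, and_true]
  tauto

theorem sum_lt_one_of_mem_interior_typeB₀_zero (hx : x ∈ interior (typeB₀ 0)) :
    ∑ i, x i < 1 := by
  rw [typeB₀_zero_eq_convexHull] at hx
  exact ((isBarycentricDual_lowFace.mem_interior_convexHull_cone_iff cartesianCoord_a₀
    (by simp)).1 hx).1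

theorem two_lt_sum_of_mem_interior_typeB₀_one (hx : x ∈ interior (typeB₀ 1)) :
    2 < ∑ i, x i := by
  rw [typeB₀_one_eq_convexHull,
    isBarycentricDual_highCorner.mem_interior_convexHull_iff (by simp)] at hx
  simpa [affineMap_sum_apply, cartesianCoord_apply] using hx 3

theorem sum_mem_Ioo_of_mem_interior_typeB₀_octant (hx : x ∈ interior (typeB₀ n.succ.succ)) :
    ∑ i, x i ∈ Set.Ioo 1 2 := by
  have abs_lt_one := (abs_three_sub_two_mul_sum_le x).trans_lt
    (mem_interior_typeB₀_octant_iff.1 hx).1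
  rw [abs_lt] at abs_lt_one
  constructor <;> linarith

theorem exists_mem_typeB₀_octant_iff :
    (∃ n : Fin 8, x ∈ typeB₀ n.succ.succ) ↔ x ∈ unitCube ∧ 1 ≤ ∑ i, x i ∧ ∑ i, x i ≤ 2 := by
  simp only [mem_typeB₀_octant_iff, exists_and_left, sum_abs_octahedralCoord_le_one_iff,
    and_iff_left_iff_imp]
  intro _
  choose ε nonneg using fun i ↦ exists_int_units_smul_nonneg (octahedralCoord i x)
  obtain ⟨n, rfl⟩ := octantSign_bijective.surjective ε
  exact ⟨n, nonneg⟩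

theorem typeB₀_zero_subset_unitCube : typeB₀ 0 ⊆ unitCube := by
  intro x hx i
  obtain ⟨sum_le_one, nonneg⟩ := mem_typeB₀_zero_iff.1 hx
  exact ⟨nonneg i, (Finset.single_le_sum (fun j _ ↦ nonneg j) (Finset.mem_univ i)).trans sum_le_one⟩

theorem typeB₀_one_subset_unitCube : typeB₀ 1 ⊆ unitCube := by
  intro x hx i
  obtain ⟨two_le_sum, le_one⟩ := mem_typeB₀_one_iff.1 hx
  have one_sub_le : 1 - x i ≤ 3 - ∑ j, x j :=
    calc 1 - x i ≤ ∑ j, (1 - x j) :=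
        Finset.single_le_sum (fun j _ ↦ sub_nonneg.2 (le_one j)) (Finset.mem_univ i)
      _ = 3 - ∑ j, x j := by simp
  exact ⟨by linarith, le_one i⟩

theorem iUnion_typeB₀ : ⋃ k, typeB₀ k = unitCube := by
  ext x
  rw [Set.mem_iUnion, Fin.exists_fin_succ, Fin.exists_fin_succ, exists_mem_typeB₀_octant_iff]
  constructor
  · rintro (low | high | ⟨mem_cube, -⟩)
    · exact typeB₀_zero_subset_unitCube low
    · exact typeB₀_one_subset_unitCube high
    · exact mem_cube
  · intro mem_cube
    rcases le_total (∑ i, x i) 1 with sum_le_one | one_le_sum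
    · exact .inl (mem_typeB₀_zero_iff.2 ⟨sum_le_one, fun i ↦ (mem_cube i).1⟩)
    rcases le_total (∑ i, x i) 2 with sum_le_two | two_le_sum
    · exact .inr (.inr ⟨mem_cube, one_le_sum, sum_le_two⟩)
    · exact .inr (.inl (mem_typeB₀_one_iff.2 ⟨two_le_sum, fun i ↦ (mem_cube i).2⟩))

theorem disjoint_interior_typeB₀_octant {m n : Fin 8} (h : m ≠ n) :
    Disjoint (interior (typeB₀ m.succ.succ)) (interior (typeB₀ n.succ.succ)) := by
  refine Set.disjoint_left.2 fun x hm hn ↦ h (octantSign_bijective.injective (funext fun i ↦ ?_))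
  rw [mem_interior_typeB₀_octant_iff] at hm hn
  exact int_units_eq_of_smul_pos (hm.2 i) (hn.2 i)

theorem disjoint_interior_typeB₀_zero_one :
    Disjoint (interior (typeB₀ 0)) (interior (typeB₀ 1)) := by
  refine Set.disjoint_left.2 fun x low high ↦ ?_
  linarith [sum_lt_one_of_mem_interior_typeB₀_zero low, two_lt_sum_of_mem_interior_typeB₀_one high]

theorem disjoint_interior_typeB₀_zero_octant (n : Fin 8) :
    Disjoint (interior (typeB₀ 0)) (interior (typeB₀ n.succ.succ)) :=
  Set.disjoint_left.2 fun _ low mid ↦ (sum_lt_one_of_mem_interior_typeB₀_zero low).not_gt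
    (sum_mem_Ioo_of_mem_interior_typeB₀_octant mid).1

theorem disjoint_interior_typeB₀_one_octant (n : Fin 8) :
    Disjoint (interior (typeB₀ 1)) (interior (typeB₀ n.succ.succ)) :=
  Set.disjoint_left.2 fun _ high mid ↦ (two_lt_sum_of_mem_interior_typeB₀_one high).not_gt
    (sum_mem_Ioo_of_mem_interior_typeB₀_octant mid).2

theorem pairwise_disjoint_interior_typeB₀ :
    Pairwise fun k l ↦ Disjoint (interior (typeB₀ k)) (interior (typeB₀ l)) := by
  refine pairwise_disjoint_fin_succ (fun k ↦ ?_) (pairwise_disjoint_fin_succ (fun n ↦ ?_) ?_)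
  · cases k using Fin.cases with
    | zero => exact disjoint_interior_typeB₀_zero_one
    | succ n => exact disjoint_interior_typeB₀_zero_octant n
  · exact disjoint_interior_typeB₀_one_octant n
  · exact fun m n ↦ disjoint_interior_typeB₀_octant

end Tetrahedra

/-- The ten tetrahedra of the 'type B₀' triangulation of the unit cube,
`a₀a₁a₂a₄, a₃a₅a₆a₇, ba₁a₂a₄, ba₁a₄a₅, ba₁a₃a₅, ba₃a₅a₆, ba₂a₃a₆, ba₂a₄a₆, ba₄a₅a₆,
ba₁a₂a₃` (where `b = (1/2,1/2,1/2)` is the center), each have affinely independent vertex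
sets, their union is `[0,1]³`, and they have pairwise disjoint interiors. -/
theorem typeB₀_decomposition_of_cube :
    AffineIndependent ℝ ![a₀, a₁, a₂, a₄] ∧ AffineIndependent ℝ ![a₃, a₅, a₆, a₇] ∧
    AffineIndependent ℝ ![bCtr, a₁, a₂, a₄] ∧ AffineIndependent ℝ ![bCtr, a₁, a₄, a₅] ∧
    AffineIndependent ℝ ![bCtr, a₁, a₃, a₅] ∧ AffineIndependent ℝ ![bCtr, a₃, a₅, a₆] ∧
    AffineIndependent ℝ ![bCtr, a₂, a₃, a₆] ∧ AffineIndependent ℝ ![bCtr, a₂, a₄, a₆] ∧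
    AffineIndependent ℝ ![bCtr, a₄, a₅, a₆] ∧ AffineIndependent ℝ ![bCtr, a₁, a₂, a₃] ∧
    (⋃ k, typeB₀ k) = unitCube ∧
    (∀ k l : Fin 10, k ≠ l → interior (typeB₀ k) ∩ interior (typeB₀ l) = ∅) := by
  have affineIndependent_octant (n : Fin 8) :
      AffineIndependent ℝ (Matrix.vecCons bCtr (octantVertex n)) :=
    ((isBarycentricDual_octantFace n).cone
      (octantSign_smul_octahedralCoord_bCtr n)).affineIndependent
  exact ⟨(isBarycentricDual_lowFace.cone cartesianCoord_a₀).affineIndependent,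
    isBarycentricDual_highCorner.affineIndependent,
    affineIndependent_octant 0, affineIndependent_octant 1, affineIndependent_octant 2,
    affineIndependent_octant 3, affineIndependent_octant 4, affineIndependent_octant 5,
    affineIndependent_octant 6, affineIndependent_octant 7, iUnion_typeB₀,
    fun k l hkl ↦ (pairwise_disjoint_interior_typeB₀ hkl).inter_eq⟩
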